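/- Fix finite nonempty types S and A, a transition kernel F : S → A → S → ℝ with F s a s' ≥ 0 and ∑_{s'} F s a s' = 1; a perturbation prior p : S → S → ℝ with p s s̃ > 0 and ∑_{s̃} p s s̃ = 1; a policy π : S → A → ℝ with π s̃ a ≥ 0 and ∑_a π s̃ a = 1; a reward r : S → A → ℝ; γ with 0 ≤ γ < 1; α_attk > 0; α_ent ∈ ℝ; and f : ℝ → ℝ convex with f 1 = 0. Define H(s̃) = −∑_a π s̃ a * Real.log (π s̃ a); the adversary reward c(s, s̃) = ∑_a π s̃ a * (−r s a); the policy-averaged transition G(s, s̃, s') = ∑_a π s̃ a * F s a s'; the soft-best functional M_s(u) = ⨆ over probability vectors ν on S of ( ∑_{s̃} ν s̃ * u s̃ − α_attk * ∑_{s̃} p s s̃ * f (ν s̃ / p s s̃) ); and the adversary operator (T_adv Q)(s, s̃) = c(s, s̃) + γ * ∑_{s'} G(s, s̃, s') * M_{s'}( fun s̃' => Q s' s̃' − α_ent * H(s̃') ) for Q : S → S → ℝ. Then T_adv is a γ-contraction in sup norm: for all Q₁, Q₂ : S → S → ℝ, max_{(s,s̃)} |(T_adv Q₁)(s,s̃)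 − (T_adv Q₂)(s,s̃)| ≤ γ * max_{(s,s̃)} |Q₁(s,s̃) − Q₂(s,s̃)|. -/

import Mathlib

/-!
Averaging against a probability vector is 1-Lipschitz for the sup norm, and pointwise suprema keep
Lipschitz constants; hence the soft-best functional, a supremum of averages shifted by constants, is
1-Lipschitz. Composing it with the transition average and scaling by `γ` gives the contraction.
The supremum is finite because Jensen's inequality bounds the `f`-divergence below by `f 1`.
-/

open scoped NNReal

section Simplex

variable {ι X : Type*} [Fintype ι] [Fintype X]

lemma sum_mul_mem_stdSimplex {w : ι → ℝ} {P : ι → X → ℝ}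
    (hw : w ∈ stdSimplex ℝ ι) (hP : ∀ i, P i ∈ stdSimplex ℝ X) :
    (fun x ↦ ∑ i, w i * P i x) ∈ stdSimplex ℝ X := by
  simpa only [Finset.sum_fn, Pi.smul_apply, smul_eq_mul] using
    (convex_stdSimplex ℝ X).sum_mem (fun i _ ↦ hw.1 i) hw.2 fun i _ ↦ hP i

lemma lipschitzWith_dotProduct_of_mem_stdSimplex {w : X → ℝ} (hw : w ∈ stdSimplex ℝ X) :
    LipschitzWith 1 fun u : X → ℝ ↦ w ⬝ᵥ u := by
  refine LipschitzWith.of_le_add fun u v ↦ ?_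
  calc w ⬝ᵥ u ≤ ∑ x, w x * (v x + dist u v) := by
        refine Finset.sum_le_sum fun x _ ↦ mul_le_mul_of_nonneg_left ?_ (hw.1 x)
        linarith [le_abs_self (u x - v x), Real.dist_eq (u x) (v x), dist_le_pi_dist u v x]
    _ = w ⬝ᵥ v + dist u v := by
        simp only [mul_add, Finset.sum_add_distrib, ← Finset.sum_mul, hw.2, one_mul, dotProduct]

end Simplex

lemma lipschitzWith_iSup {ι E : Type*} [Nonempty ι] [PseudoMetricSpace E] {K : ℝ≥0}
    {φ : ι → E → ℝ} (hφ : ∀ i, LipschitzWith K (φ i)) {x₀ : E}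
    (hbdd : BddAbove (Set.range fun i ↦ φ i x₀)) :
    LipschitzWith K fun x ↦ ⨆ i, φ i x := by
  have hbdd' (x : E) : BddAbove (Set.range fun i ↦ φ i x) := by
    obtain ⟨b, hb⟩ := hbdd
    refine ⟨b + K * dist x x₀, Set.forall_mem_range.2 fun i ↦ ?_⟩
    exact ((hφ i).le_add_mul x x₀).trans (add_le_add_left (hb ⟨i, rfl⟩) _)
  refine LipschitzWith.of_le_add_mul K fun x y ↦ ciSup_le fun i ↦ ?_
  exact ((hφ i).le_add_mul x y).trans (add_le_add_left (le_ciSup (hbdd' y) i) _)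

lemma sup'_abs_sub_eq_dist {X Y : Type*} [Fintype X] [Fintype Y]
    (hne : (Finset.univ : Finset (X × Y)).Nonempty) (Q₁ Q₂ : X → Y → ℝ) :
    Finset.univ.sup' hne (fun z : X × Y ↦ |Q₁ z.1 z.2 - Q₂ z.1 z.2|) = dist Q₁ Q₂ := by
  apply le_antisymm
  · exact Finset.sup'_le _ _ fun z _ ↦
      (dist_le_pi_dist (Q₁ z.1) (Q₂ z.1) z.2).trans (dist_le_pi_dist Q₁ Q₂ z.1)
  · have : Nonempty X := ⟨hne.choose.1⟩
    have : Nonempty Y := ⟨hne.choose.2⟩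
    refine (dist_pi_le_iff').2 fun x ↦ (dist_pi_le_iff').2 fun y ↦ ?_
    exact Finset.le_sup' (fun z : X × Y ↦ |Q₁ z.1 z.2 - Q₂ z.1 z.2|) (Finset.mem_univ (x, y))

section FDivergence

variable {X : Type*} [Fintype X]

/-- The `f`-divergence of `ν` from `p`, for weights on a finite type. It is used with `p`
everywhere positive, so no convention at `p x = 0` is built in. -/
noncomputable def fDivergence (f : ℝ → ℝ) (ν p : X → ℝ) : ℝ :=
  ∑ x, p x * f (ν x / p x)

lemma map_one_le_fDivergence {f : ℝ → ℝ} (hf : ConvexOn ℝ (Set.Ici 0) f) {ν p : X → ℝ}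
    (hν : ν ∈ stdSimplex ℝ X) (hp_pos : ∀ x, 0 < p x) (hp_sum : ∑ x, p x = 1) :
    f 1 ≤ fDivergence f ν p := by
  have hmean : ∑ x, p x * (ν x / p x) = 1 := by
    simp only [mul_div_cancel₀ _ (hp_pos _).ne', hν.2]
  have jensen := hf.map_sum_le (fun x _ ↦ (hp_pos x).le) hp_sum
    fun x _ ↦ div_nonneg (hν.1 x) (hp_pos x).le
  simpa only [smul_eq_mul, hmean, fDivergence] using jensen

lemma bddBelow_range_mul_fDivergence {α : ℝ} (hα : 0 ≤ α) {f : ℝ → ℝ}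
    (hf : ConvexOn ℝ (Set.Ici 0) f) {p : X → ℝ} (hp_pos : ∀ x, 0 < p x) (hp_sum : ∑ x, p x = 1) :
    BddBelow (Set.range fun ν : stdSimplex ℝ X ↦ α * fDivergence f ν.1 p) :=
  ⟨α * f 1, Set.forall_mem_range.2 fun ν ↦
    mul_le_mul_of_nonneg_left (map_one_le_fDivergence hf ν.2 hp_pos hp_sum) hα⟩

end FDivergence

section Bellman

variable {X Y : Type*} [Fintype X] [Fintype Y]

/-- The soft maximum of `u` with regularizer `Ω`: the best penalized average of `u` over
probability vectors, i.e. the convex conjugate of `Ω`. It has its intended meaning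
when `Ω` is bounded below; an unbounded supremum of reals is `0`. -/
noncomputable def regularizedMax (Ω : stdSimplex ℝ Y → ℝ) (u : Y → ℝ) : ℝ :=
  ⨆ ν : stdSimplex ℝ Y, (ν.1 ⬝ᵥ u - Ω ν)

lemma lipschitzWith_regularizedMax [Nonempty Y] {Ω : stdSimplex ℝ Y → ℝ}
    (hΩ : BddBelow (Set.range Ω)) : LipschitzWith 1 (regularizedMax Ω) := by
  refine lipschitzWith_iSup (x₀ := 0) (fun ν ↦ ?_) ?_
  · simpa only [sub_eq_add_neg, add_zero] using
      (lipschitzWith_dotProduct_of_mem_stdSimplex ν.2).add (LipschitzWith.const (-Ω ν))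
  · simpa only [dotProduct_zero, zero_sub] using hΩ.range_neg

/-- The Bellman operator on state-action values with reward `c`, transition weights `G`, discount
`γ` and backup `V`, where `V x` turns the action values at `x` into a value of the state `x`. -/
def bellmanOperator (c : X → Y → ℝ) (G : X → Y → X → ℝ) (γ : ℝ) (V : X → (Y → ℝ) → ℝ)
    (Q : X → Y → ℝ) : X → Y → ℝ :=
  fun x y ↦ c x y + γ * (G x y ⬝ᵥ fun x' ↦ V x' (Q x'))

lemma lipschitzWith_bellmanOperator (c : X → Y → ℝ) {G : X → Y → X → ℝ}
    (hG : ∀ x y, G x y ∈ stdSimplex ℝ X) (γ : ℝ) {V : X → (Y → ℝ) → ℝ} {K : ℝ≥0}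
    (hV : ∀ x, LipschitzWith K (V x)) :
    LipschitzWith (‖γ‖₊ * K) (bellmanOperator c G γ V) := by
  refine LipschitzWith.of_dist_le_mul fun Q₁ Q₂ ↦ ?_
  have hbackup : dist (fun x ↦ V x (Q₁ x)) (fun x ↦ V x (Q₂ x)) ≤ K * dist Q₁ Q₂ :=
    (dist_pi_le_iff (by positivity)).2 fun x ↦
      (hV x).dist_le_mul_of_le (dist_le_pi_dist Q₁ Q₂ x)
  refine (dist_pi_le_iff (by positivity)).2 fun x ↦ (dist_pi_le_iff (by positivity)).2 fun y ↦ ?_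
  calc dist (bellmanOperator c G γ V Q₁ x y) (bellmanOperator c G γ V Q₂ x y)
      = ‖γ‖ * dist (G x y ⬝ᵥ fun x' ↦ V x' (Q₁ x')) (G x y ⬝ᵥ fun x' ↦ V x' (Q₂ x')) := by
        rw [bellmanOperator, bellmanOperator, dist_add_left, ← smul_eq_mul, ← smul_eq_mul,
          dist_smul₀]
    _ ≤ ‖γ‖ * (K * dist Q₁ Q₂) := by
        gcongr
        simpa only [NNReal.coe_one, one_mul] using
          (lipschitzWith_dotProduct_of_mem_stdSimplex (hG x y)).dist_le_mul_of_le hbackup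
    _ = ↑(‖γ‖₊ * K) * dist Q₁ Q₂ := by rw [NNReal.coe_mul, coe_nnnorm, mul_assoc]

theorem valt_adversary_bellman_contraction_general [Nonempty X] [Nonempty Y] (c b : X → Y → ℝ)
    {G : X → Y → X → ℝ} (hG : ∀ x y, G x y ∈ stdSimplex ℝ X) {γ : ℝ} (hγ : 0 ≤ γ)
    {Ω : X → stdSimplex ℝ Y → ℝ} (hΩ : ∀ x, BddBelow (Set.range (Ω x)))
    {T : (X → Y → ℝ) → X → Y → ℝ}
    (hT : T = bellmanOperator c G γ fun x u ↦ regularizedMax (Ω x) (u - b x))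
    (Q₁ Q₂ : X → Y → ℝ) :
    Finset.univ.sup' Finset.univ_nonempty
        (fun z : X × Y ↦ |T Q₁ z.1 z.2 - T Q₂ z.1 z.2|) ≤
      γ * Finset.univ.sup' Finset.univ_nonempty
        (fun z : X × Y ↦ |Q₁ z.1 z.2 - Q₂ z.1 z.2|) := by
  have hbackup (x : X) : LipschitzWith 1 fun u ↦ regularizedMax (Ω x) (u - b x) := by
    simpa only [mul_one, Function.comp_def, IsometryEquiv.subRight_apply] using
      (lipschitzWith_regularizedMax (hΩ x)).comp (IsometryEquiv.subRight (b x)).isometry.lipschitz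
  rw [sup'_abs_sub_eq_dist, sup'_abs_sub_eq_dist, hT]
  simpa only [mul_one, coe_nnnorm, Real.norm_of_nonneg hγ] using
    (lipschitzWith_bellmanOperator c hG γ hbackup).dist_le_mul Q₁ Q₂

end Bellman

/-- Contraction conclusion of the paper's Theorem 3.3: the soft-optimal
adversary's Bellman operator is a γ-contraction in sup norm. -/
theorem valt_adversary_bellman_contraction
    {S A : Type*} [Fintype S] [Nonempty S] [Fintype A] [Nonempty A]
    (F : S → A → S → ℝ) (hF0 : ∀ s a s', 0 ≤ F s a s')
    (hF1 : ∀ s a, ∑ s', F s a s' = 1)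
    (p : S → S → ℝ) (hp0 : ∀ s t, 0 < p s t) (hp1 : ∀ s, ∑ t, p s t = 1)
    (π : S → A → ℝ) (hπ0 : ∀ t a, 0 ≤ π t a) (hπ1 : ∀ t, ∑ a, π t a = 1)
    (r : S → A → ℝ) (γ : ℝ) (hγ0 : 0 ≤ γ) (hγ1 : γ < 1)
    (αattk αent : ℝ) (hαattk : 0 < αattk)
    (f : ℝ → ℝ) (hf : ConvexOn ℝ Set.univ f) (hf1 : f 1 = 0)
    (H : S → ℝ) (hH : ∀ t, H t = -∑ a, π t a * Real.log (π t a))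
    (c : S → S → ℝ) (hc : ∀ s t, c s t = ∑ a, π t a * (-r s a))
    (G : S → S → S → ℝ) (hG : ∀ s t s', G s t s' = ∑ a, π t a * F s a s')
    (M : S → (S → ℝ) → ℝ)
    (hM : ∀ s u, M s u =
      ⨆ ν : {w : S → ℝ // (∀ t, 0 ≤ w t) ∧ ∑ t, w t = 1},
        ((∑ t, ν.1 t * u t) - αattk * ∑ t, p s t * f (ν.1 t / p s t)))
    (Tadv : (S → S → ℝ) → S → S → ℝ)
    (hTadv : ∀ Q s t, Tadv Q s t = c s t + γ * ∑ s', G s t s' *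
      M s' (fun t' => Q s' t' - αent * H t'))
    (Q₁ Q₂ : S → S → ℝ) :
    Finset.univ.sup' Finset.univ_nonempty
        (fun st : S × S => |Tadv Q₁ st.1 st.2 - Tadv Q₂ st.1 st.2|) ≤
      γ * Finset.univ.sup' Finset.univ_nonempty
        (fun st : S × S => |Q₁ st.1 st.2 - Q₂ st.1 st.2|) := by
  have hf_nonneg : ConvexOn ℝ (Set.Ici 0) f := hf.subset (Set.subset_univ _) (convex_Ici 0)
  have hG_mem (s t : S) : G s t ∈ stdSimplex ℝ S := by
    rw [funext (hG s t)]
    exact sum_mul_mem_stdSimplex ⟨hπ0 t, hπ1 t⟩ fun a ↦ ⟨hF0 s a, hF1 s a⟩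
  refine valt_adversary_bellman_contraction_general c (fun _ t ↦ αent * H t) hG_mem hγ0
    (fun s ↦ bddBelow_range_mul_fDivergence hαattk.le hf_nonneg (hp0 s) (hp1 s)) ?_ Q₁ Q₂
  funext Q s t
  simp only [hTadv, hM]
  rfl
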